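/- Fix $n\geq 2$, $0<\rho<\sigma<\infty$, and $v\in L^1(B_\sigma)$ where $B_r\subset\mathbb{R}^n$ is the ball of radius $r$ centered at the origin. Define $J(\rho,\sigma,v):=\inf\{\int_{B_\sigma}|v|\,|\nabla\eta|^2\,dx : \eta\in C_0^1(B_\sigma),\ \eta\geq 0,\ \eta=1\text{ on }B_\rho\}$. Then for every $\delta\in(0,1]$, $J(\rho,\sigma,v)\leq (\sigma-\rho)^{-(1+1/\delta)}\big(\int_\rho^\sigma \big(\int_{S_r}|v|\,d\mathcal{H}^{n-1}\big)^\delta\,dr\big)^{1/\delta}$, where $S_r=\{x:|x|=r\}$. -/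

import Mathlib

open MeasureTheory Metric

/-!
For a radial cutoff `η x = ζ ‖x‖` the energy `∫ |v| ‖∇η‖²` is the one-dimensional energy `∫ |ζ'|² H`
weighted by the spherical integrals `H r` of `|v|` over the spheres `S_r`. Subject to
`∫ |ζ'| = 1` the latter is smallest, with value `(∫ H⁻¹)⁻¹`, when `|ζ'|` is proportional to `H⁻¹`,
and Hölder's inequality applied to `1 = H ^ (δ / (1 + δ)) * H ^ (-δ / (1 + δ))` on `(ρ, σ)` gives
`(∫ H⁻¹)⁻¹ ≤ (σ - ρ) ^ (-(1 + 1 / δ)) * (∫ H ^ δ) ^ (1 / δ)`. As `H⁻¹` need be neither continuous,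
bounded nor compactly supported in `(ρ, σ)`, the optimal profile is only approximated: by
`(H + ε)⁻¹` on a compact subset, and that by mollification.

Polar integration holds for the measure `Measure.toSphere`, which is compared with the Hausdorff
measure `μH[n - 1]` from both sides. A subset of the unit sphere of small diameter `d` spans a
shell sector contained in a box whose sides across the radial direction are about `d`, so
`μH[n - 1]`, in Mathlib's normalisation, dominates `toSphere`: the energy of a radial cutoff is at
most its one-dimensional energy. Eilenberg's inequality bounds `μH[n - 1]` by a multiple of
`toSphere`; this makes `v` integrable on almost every sphere, so that the Bochner integrals `H r` do
not take the value `0` by convention.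
-/

section Eilenberg

open Set Filter
open scoped ENNReal NNReal Topology

lemma lintegral_tsum_indicator_closure_image_le {X : Type*} [PseudoEMetricSpace X]
    {K : ℝ≥0} {f : X → ℝ} (hf : LipschitzWith K f) {d : ℝ} (hd : 0 ≤ d) (t : ℕ → Set X) :
    ∫⁻ r, ∑' i, (closure (f '' t i)).indicator (fun _ => ediam (t i) ^ d) r ≤
      K * ∑' i, ediam (t i) ^ (d + 1) := by
  have h_image (i : ℕ) : volume (closure (f '' t i)) ≤ K * ediam (t i) :=
    (Real.volume_le_diam _).trans ((ediam_closure _).trans_le (hf.ediam_image_le _))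
  rw [lintegral_tsum fun i =>
    (measurable_const.indicator isClosed_closure.measurableSet).aemeasurable,
    ← ENNReal.tsum_mul_left]
  refine ENNReal.tsum_le_tsum fun i => ?_
  calc ∫⁻ r, (closure (f '' t i)).indicator (fun _ => ediam (t i) ^ d) r
      = ediam (t i) ^ d * volume (closure (f '' t i)) :=
        lintegral_indicator_const isClosed_closure.measurableSet _
    _ ≤ ediam (t i) ^ d * (K * ediam (t i)) := by gcongr; exact h_image i
    _ = K * ediam (t i) ^ (d + 1) := by
        rw [ENNReal.rpow_add_of_nonneg _ _ hd zero_le_one, ENNReal.rpow_one]; ring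

variable {X : Type*} [EMetricSpace X] [MeasurableSpace X] [BorelSpace X]

lemma exists_cover_of_hausdorffMeasure_lt {d : ℝ} (hd : 0 < d) {A : Set X} {c ε : ℝ≥0∞}
    (hA : μH[d] A < c) (hε : 0 < ε) :
    ∃ t : ℕ → Set X, A ⊆ ⋃ i, t i ∧ (∀ i, ediam (t i) ≤ ε) ∧ ∑' i, ediam (t i) ^ d < c := by
  rw [Measure.hausdorffMeasure_apply] at hA
  have hAε := (le_iSup₂ (f := fun (r : ℝ≥0∞) (_ : 0 < r) =>
    ⨅ (t : ℕ → Set X) (_ : A ⊆ ⋃ n, t n) (_ : ∀ n, ediam (t n) ≤ r),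
      ∑' n, ⨆ _ : (t n).Nonempty, ediam (t n) ^ d) ε hε).trans_lt hA
  simp only [iInf_lt_iff] at hAε
  obtain ⟨t, ht_cover, ht_diam, ht_sum⟩ := hAε
  refine ⟨t, ht_cover, ht_diam, (ENNReal.tsum_le_tsum fun i => ?_).trans_lt ht_sum⟩
  rcases (t i).eq_empty_or_nonempty with h | h
  · simp [h, hd]
  · exact le_iSup_of_le h le_rfl

lemma hausdorffMeasure_inter_fiber_le_liminf {Y : Type*} (f : X → Y) (d : ℝ) {A : Set X}
    {t : ℕ → ℕ → Set X} {q : ℕ → ℝ≥0∞} (hq : Tendsto q atTop (𝓝 0))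
    (ht_cover : ∀ k, A ⊆ ⋃ i, t k i) (ht_diam : ∀ k i, ediam (t k i) ≤ q k) (y : Y) :
    μH[d] (A ∩ f ⁻¹' {y}) ≤
      liminf (fun k => ∑' i, (f '' t k i).indicator (fun _ => ediam (t k i) ^ d) y) atTop := by
  let ι : ℕ → Type := fun k => {i // y ∈ f '' t k i}
  have h_cover (k : ℕ) : A ∩ f ⁻¹' {y} ⊆ ⋃ i : ι k, t k i := by
    rintro x ⟨hxA, hxy⟩
    obtain ⟨i, hi⟩ := mem_iUnion.1 (ht_cover k hxA)
    exact mem_iUnion.2 ⟨⟨i, x, hi, hxy⟩, hi⟩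
  refine (Measure.hausdorffMeasure_le_liminf_tsum d _ q hq (fun k (i : ι k) => t k i)
    (.of_forall fun k i => ht_diam k i) (.of_forall h_cover)).trans_eq ?_
  exact congrArg (liminf · atTop) (funext fun k =>
    tsum_subtype {i | y ∈ f '' t k i} fun i => ediam (t k i) ^ d)

/-- **Eilenberg's inequality** for real-valued maps. The left-hand integral is a lower integral, so
the slice measure is not required to be measurable. -/
theorem lintegral_hausdorffMeasure_inter_fiber_le {K : ℝ≥0} {f : X → ℝ} (hf : LipschitzWith K f)
    {d : ℝ} (hd : 0 ≤ d) {A : Set X} (hA : μH[d + 1] A ≠ ⊤) :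
    ∫⁻ r, μH[d] (A ∩ f ⁻¹' {r}) ≤ K * μH[d + 1] A := by
  let q : ℕ → ℝ≥0∞ := fun k => (k + 1 : ℝ≥0∞)⁻¹
  have hq_pos (k : ℕ) : 0 < q k := ENNReal.inv_pos.2 (by finiteness)
  have hq : Tendsto q atTop (𝓝 0) := by
    simpa [q] using (tendsto_add_atTop_iff_nat 1).2 ENNReal.tendsto_inv_nat_nhds_zero
  choose t ht_cover ht_diam ht_sum using fun k =>
    exists_cover_of_hausdorffMeasure_lt (by positivity) (ENNReal.lt_add_right hA (hq_pos k).ne')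
      (hq_pos k)
  let F : ℕ → ℝ → ℝ≥0∞ := fun k r =>
    ∑' i, (closure (f '' t k i)).indicator (fun _ => ediam (t k i) ^ d) r
  have h_slice (r : ℝ) : μH[d] (A ∩ f ⁻¹' {r}) ≤ liminf (fun k => F k r) atTop :=
    (hausdorffMeasure_inter_fiber_le_liminf f d hq ht_cover ht_diam r).trans
      (liminf_le_liminf (.of_forall fun k => ENNReal.tsum_le_tsum fun i =>
        indicator_le_indicator_of_subset subset_closure (fun _ => zero_le) r))
  calc ∫⁻ r, μH[d] (A ∩ f ⁻¹' {r})
      ≤ ∫⁻ r, liminf (fun k => F k r) atTop := lintegral_mono h_slice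
    _ ≤ liminf (fun k => ∫⁻ r, F k r) atTop := lintegral_liminf_le fun k => .tsum fun i =>
        measurable_const.indicator isClosed_closure.measurableSet
    _ ≤ liminf (fun k => K * (μH[d + 1] A + q k)) atTop :=
        liminf_le_liminf (.of_forall fun k =>
          (lintegral_tsum_indicator_closure_image_le hf hd (t k)).trans
            (by gcongr; exact (ht_sum k).le))
    _ = K * μH[d + 1] A := by
        refine Tendsto.liminf_eq ?_
        simpa using ENNReal.Tendsto.const_mul (hq.const_add (μH[d + 1] A)) (.inr ENNReal.coe_ne_top)

end Eilenberg

section PolarMeasure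

open Set Filter Module Measure
open scoped ENNReal NNReal Topology Pointwise

variable {E : Type*} [NormedAddCommGroup E] [NormedSpace ℝ E] [MeasurableSpace E] [BorelSpace E]

/-- The measure on `E` with angular part `κ` and radial part `r ^ (dim E - 1) dr`, that is
`A ↦ ∫₀^∞ r ^ (dim E - 1) * κ {ω | r • ω ∈ A} dr`. -/
noncomputable def polarMeasure (κ : Measure (sphere (0 : E) 1)) : Measure E :=
  (κ.prod (volumeIoiPow (finrank ℝ E - 1))).map fun p => p.2.1 • p.1.1

lemma measurable_polar_smul : Measurable fun p : sphere (0 : E) 1 × Ioi (0 : ℝ) => p.2.1 • p.1.1 :=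
  Continuous.measurable (by fun_prop)

lemma polarMeasure_mono {κ κ' : Measure (sphere (0 : E) 1)} [SFinite κ'] (h : κ ≤ κ') :
    polarMeasure κ ≤ polarMeasure κ' :=
  map_mono (prod_mono h le_rfl) measurable_polar_smul

lemma mul_volumeIoiPow_le_polarMeasure (κ : Measure (sphere (0 : E) 1)) [SFinite κ]
    (I : Set ℝ) (U : Set (sphere (0 : E) 1)) :
    κ U * volumeIoiPow (finrank ℝ E - 1) ((↑) ⁻¹' I) ≤
      polarMeasure κ (I • (Subtype.val '' U)) := by
  rw [← prod_prod]
  refine (measure_mono ?_).trans (le_map_apply measurable_polar_smul.aemeasurable _)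
  rintro ⟨ω, r⟩ ⟨hω, hr⟩
  exact smul_mem_smul hr (mem_image_of_mem _ hω)

section Fubini

variable {F : Type*} [NormedAddCommGroup F] {κ : Measure (sphere (0 : E) 1)} {f : E → F}

lemma integrable_prod_of_integrable_polarMeasure (hf : Integrable f (polarMeasure κ)) :
    Integrable (fun p : sphere (0 : E) 1 × Ioi (0 : ℝ) => f (p.2.1 • p.1.1))
      (κ.prod (volumeIoiPow (finrank ℝ E - 1))) :=
  (integrable_map_measure hf.1 measurable_polar_smul.aemeasurable).1 hf

variable [NormedSpace ℝ F]

lemma integrable_volumeIoiPow_iff {k : ℕ} {g : ℝ → F} :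
    Integrable (fun r : Ioi (0 : ℝ) => g r) (volumeIoiPow k) ↔
      IntegrableOn (fun r => r ^ k • g r) (Ioi 0) := by
  rw [integrableOn_iff_comap_subtypeVal measurableSet_Ioi, volumeIoiPow,
    integrable_withDensity_iff_integrable_smul' (by fun_prop) (by simp)]
  refine integrable_congr (.of_forall fun r => ?_)
  simp [ENNReal.toReal_ofReal (pow_nonneg r.2.le k)]

lemma integral_volumeIoiPow (k : ℕ) (g : ℝ → F) :
    ∫ r : Ioi (0 : ℝ), g r ∂volumeIoiPow k = ∫ r in Ioi 0, r ^ k • g r := by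
  rw [volumeIoiPow, integral_withDensity_eq_integral_toReal_smul (by fun_prop) (by simp),
    ← integral_subtype_comap measurableSet_Ioi fun r => r ^ k • g r]
  exact integral_congr_ae (.of_forall fun r => by
    simp [ENNReal.toReal_ofReal (pow_nonneg r.2.le k)])

variable [SFinite κ]

lemma integrableOn_polar_of_integrable (hf : Integrable f (polarMeasure κ)) :
    IntegrableOn (fun r : ℝ => r ^ (finrank ℝ E - 1) • ∫ ω, f (r • ω.1) ∂κ) (Ioi 0) :=
  integrable_volumeIoiPow_iff.1
    (integrable_prod_of_integrable_polarMeasure hf).integral_prod_right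

theorem integral_polarMeasure (hf : Integrable f (polarMeasure κ)) :
    ∫ x, f x ∂polarMeasure κ =
      ∫ r in Ioi (0 : ℝ), r ^ (finrank ℝ E - 1) • ∫ ω, f (r • ω.1) ∂κ := by
  rw [polarMeasure, integral_map measurable_polar_smul.aemeasurable hf.1,
    integral_prod_symm _ (integrable_prod_of_integrable_polarMeasure hf)]
  exact integral_volumeIoiPow _ fun r => ∫ ω, f (r • ω.1) ∂κ

end Fubini

variable [FiniteDimensional ℝ E]

@[simp]
lemma polarMeasure_toSphere [Nontrivial E] (μ : Measure E) [μ.IsAddHaarMeasure] :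
    polarMeasure μ.toSphere = μ := by
  have h_coe : (fun p : sphere (0 : E) 1 × Ioi (0 : ℝ) => p.2.1 • p.1.1) ∘
      homeomorphUnitSphereProd E = (↑) := by
    ext x
    exact congrArg Subtype.val ((homeomorphUnitSphereProd E).symm_apply_apply x)
  rw [polarMeasure, ← μ.measurePreserving_homeomorphUnitSphereProd.map_eq,
    map_map measurable_polar_smul (homeomorphUnitSphereProd E).measurable, h_coe,
    (MeasurableEmbedding.subtype_coe (measurableSet_singleton _).compl).map_comap,
    Subtype.range_coe, restrict_compl_singleton]

end PolarMeasure

section SphereUpperBound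

open Set Module Measure
open scoped ENNReal NNReal Pointwise

lemma finrank_sub_one_nonneg {E : Type*} [NormedAddCommGroup E] [NormedSpace ℝ E]
    [FiniteDimensional ℝ E] [Nontrivial E] : (0 : ℝ) ≤ finrank ℝ E - 1 :=
  sub_nonneg.2 (Nat.one_le_cast.2 finrank_pos)

lemma lintegral_rpow_Ioo_zero_one {d : ℝ} (hd : 0 ≤ d) :
    ∫⁻ r in Ioo (0 : ℝ) 1, ENNReal.ofReal (r ^ d) = ENNReal.ofReal (1 / (d + 1)) := by
  have h_int : IntegrableOn (fun r : ℝ => r ^ d) (Ioc 0 1) :=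
    (intervalIntegral.intervalIntegrable_rpow' (by linarith)).1
  rw [restrict_congr_set Ioo_ae_eq_Ioc, ← ofReal_integral_eq_lintegral_ofReal h_int,
    ← intervalIntegral.integral_of_le zero_le_one, integral_rpow (.inl (by linarith)),
    Real.one_rpow, Real.zero_rpow (by linarith), sub_zero]
  filter_upwards [ae_restrict_mem measurableSet_Ioc] with r hr using Real.rpow_nonneg hr.1.le d

variable {E : Type*} [NormedAddCommGroup E] [NormedSpace ℝ E] [MeasurableSpace E] [BorelSpace E]

lemma hausdorffMeasure_smul_image_coe_sphere {d : ℝ} (hd : 0 ≤ d) {r : ℝ} (hr : 0 < r)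
    (A : Set (sphere (0 : E) 1)) :
    μH[d] (r • (Subtype.val '' A)) = ENNReal.ofReal (r ^ d) * μH[d] A := by
  rw [hausdorffMeasure_smul₀ hd hr.ne', isometry_subtype_coe.hausdorffMeasure_image (.inl hd),
    ENNReal.smul_def, smul_eq_mul, ENNReal.coe_rpow_of_nonneg _ hd, ← enorm_eq_nnnorm,
    Real.enorm_of_nonneg hr.le, ENNReal.ofReal_rpow_of_nonneg hr.le hd]

lemma rpow_mul_hausdorffMeasure_le_inter_sphere {d : ℝ} (hd : 0 ≤ d) (A : Set (sphere (0 : E) 1))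
    {r : ℝ} (hr : r ∈ Ioo (0 : ℝ) 1) :
    ENNReal.ofReal (r ^ d) * μH[d] A ≤
      μH[d] (Ioo (0 : ℝ) 1 • (Subtype.val '' A) ∩ norm ⁻¹' {r}) := by
  have h_sub : r • (Subtype.val '' A) ⊆ Ioo (0 : ℝ) 1 • (Subtype.val '' A) ∩ norm ⁻¹' {r} := by
    rintro _ ⟨_, ⟨ω, hω, rfl⟩, rfl⟩
    exact ⟨smul_mem_smul hr (mem_image_of_mem _ hω), by simp [norm_smul, abs_of_pos hr.1]⟩
  exact hausdorffMeasure_smul_image_coe_sphere hd hr.1 A ▸ measure_mono h_sub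

variable [FiniteDimensional ℝ E] [Nontrivial E]

lemma hausdorffMeasure_le_toSphere :
    (μH[(finrank ℝ E : ℝ) - 1] : Measure (sphere (0 : E) 1)) ≤
      (μH[finrank ℝ E] : Measure E).toSphere := by
  refine le_iff.2 fun A hA => ?_
  set d : ℝ := (finrank ℝ E : ℝ) - 1
  have hd : 0 ≤ d := finrank_sub_one_nonneg
  have hd_add : d + 1 = finrank ℝ E := sub_add_cancel _ _
  set K : Set E := Ioo (0 : ℝ) 1 • (Subtype.val '' A)
  have hK : K ⊆ ball 0 1 := by
    rintro _ ⟨r, hr, _, ⟨ω, -, rfl⟩, rfl⟩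
    simpa [norm_smul, abs_of_pos hr.1] using hr.2
  have hK_ne_top : μH[d + 1] K ≠ ⊤ := by
    rw [hd_add]
    exact ((measure_mono hK).trans_lt measure_ball_lt_top).ne
  -- Eilenberg's inequality for the norm on the cone over `A`.
  have h_cone : ENNReal.ofReal (1 / (d + 1)) * μH[d] A ≤ μH[finrank ℝ E] K := calc
    ENNReal.ofReal (1 / (d + 1)) * μH[d] A
      = ∫⁻ r in Ioo (0 : ℝ) 1, ENNReal.ofReal (r ^ d) * μH[d] A := by
        rw [lintegral_mul_const _ (by fun_prop), lintegral_rpow_Ioo_zero_one hd]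
    _ ≤ ∫⁻ r in Ioo (0 : ℝ) 1, μH[d] (K ∩ norm ⁻¹' {r}) :=
        setLIntegral_mono' measurableSet_Ioo fun r hr =>
          rpow_mul_hausdorffMeasure_le_inter_sphere hd A hr
    _ ≤ ∫⁻ r, μH[d] (K ∩ norm ⁻¹' {r}) := setLIntegral_le_lintegral _ _
    _ ≤ μH[finrank ℝ E] K := by
        simpa [hd_add] using
          lintegral_hausdorffMeasure_inter_fiber_le lipschitzWith_one_norm hd hK_ne_top
  calc μH[d] A = finrank ℝ E * (ENNReal.ofReal (1 / (d + 1)) * μH[d] A) := by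
        rw [← mul_assoc, hd_add, ← ENNReal.ofReal_natCast,
          ← ENNReal.ofReal_mul (Nat.cast_nonneg _),
          mul_one_div_cancel (Nat.cast_ne_zero.2 finrank_pos.ne'), ENNReal.ofReal_one, one_mul]
    _ ≤ finrank ℝ E * μH[finrank ℝ E] K := by gcongr
    _ = (μH[finrank ℝ E] : Measure E).toSphere A := (toSphere_apply' _ hA).symm

instance isFiniteMeasure_hausdorffMeasure_sphere :
    IsFiniteMeasure (μH[(finrank ℝ E : ℝ) - 1] : Measure (sphere (0 : E) 1)) :=
  isFiniteMeasure_of_le _ hausdorffMeasure_le_toSphere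

end SphereUpperBound

section SphereLowerBound

open Set Filter Module Measure
open scoped ENNReal Topology Pointwise

section InnerProductSpace

variable {E : Type*} [NormedAddCommGroup E] [InnerProductSpace ℝ E]

lemma inner_smul_mem_Icc {e x : E} (he : ‖e‖ = 1) (hx : ‖x‖ = 1) {h r : ℝ} (hxe : ‖x - e‖ ≤ h)
    (hr : r ∈ Ioo (1 - h) 1) (hr0 : 0 ≤ r) : inner ℝ e (r • x) ∈ Icc (1 - h * (1 + h)) 1 := by
  have h_expand := norm_sub_sq_real x e
  have h_sq : ‖x - e‖ ^ 2 ≤ h ^ 2 := by gcongr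
  have h_le := real_inner_le_norm e x
  rw [real_inner_comm, he, hx] at h_expand
  rw [he, hx] at h_le
  have h_ge : 1 - h ^ 2 / 2 ≤ inner ℝ e x := by linarith
  rw [real_inner_smul_right]
  constructor <;> nlinarith [hr.1, hr.2, h_ge]

lemma abs_inner_smul_sub_smul_le {u e x y : E} (hu : ‖u‖ = 1) (hue : inner ℝ u e = 0) {d h r s : ℝ}
    (hxy : ‖x - y‖ ≤ d) (hye : ‖y - e‖ ≤ d) (hr : |r| ≤ 1) (hrs : |r - s| ≤ h) :
    |inner ℝ u (r • x) - inner ℝ u (s • y)| ≤ d * (1 + h) := by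
  have h_split : inner ℝ u (r • x) - inner ℝ u (s • y) =
      inner ℝ u (r • (x - y) + (r - s) • (y - e)) := by
    simp only [inner_add_right, inner_sub_right, real_inner_smul_right, hue]; ring
  calc |inner ℝ u (r • x) - inner ℝ u (s • y)|
      ≤ ‖u‖ * ‖r • (x - y) + (r - s) • (y - e)‖ := h_split ▸ abs_real_inner_le_norm _ _
    _ ≤ |r| * ‖x - y‖ + |r - s| * ‖y - e‖ := by
        simpa [hu, norm_smul] using norm_add_le (r • (x - y)) ((r - s) • (y - e))
    _ ≤ 1 * d + h * d := by gcongr; exact (abs_nonneg _).trans hrs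
    _ = d * (1 + h) := by ring

lemma ediam_image_inner_Ioo_smul_le {e : sphere (0 : E) 1} {U : Set (sphere (0 : E) 1)} {h : ℝ}
    (h1 : h < 1) (hU : ∀ x ∈ U, dist x e ≤ h) :
    ediam ((fun x => inner ℝ e.1 x) '' (Ioo (1 - h) 1 • (Subtype.val '' U))) ≤
      ENNReal.ofReal (h * (1 + h)) := by
  suffices h_sub : (fun x => inner ℝ e.1 x) '' (Ioo (1 - h) 1 • (Subtype.val '' U)) ⊆
      Icc (1 - h * (1 + h)) 1 by simpa using ediam_mono h_sub
  rintro _ ⟨_, ⟨r, hr, _, ⟨x, hx, rfl⟩, rfl⟩, rfl⟩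
  exact inner_smul_mem_Icc (norm_eq_of_mem_sphere e) (norm_eq_of_mem_sphere x)
    ((dist_eq_norm x.1 e.1).symm.trans_le (hU x hx)) hr (by linarith [hr.1])

lemma ediam_image_inner_Ioo_smul_le_of_inner_eq_zero {u : E} (hu : ‖u‖ = 1)
    {e : sphere (0 : E) 1} (hue : inner ℝ u e.1 = 0) {U : Set (sphere (0 : E) 1)} (he : e ∈ U)
    {d h : ℝ} (h1 : h < 1) (hU : ∀ x ∈ U, ∀ y ∈ U, dist x y ≤ d) :
    ediam ((fun x => inner ℝ u x) '' (Ioo (1 - h) 1 • (Subtype.val '' U))) ≤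
      ENNReal.ofReal (d * (1 + h)) := by
  have h_dist : ∀ x ∈ U, ∀ y ∈ U, ‖x.1 - y.1‖ ≤ d := fun x hx y hy =>
    (dist_eq_norm x.1 y.1).symm.trans_le (hU x hx y hy)
  refine ediam_le ?_
  rintro _ ⟨_, ⟨r, hr, _, ⟨x, hx, rfl⟩, rfl⟩, rfl⟩ _ ⟨_, ⟨s, hs, _, ⟨y, hy, rfl⟩, rfl⟩, rfl⟩
  have hr_abs : |r| ≤ 1 := abs_le.2 (by constructor <;> linarith [hr.1, hr.2])
  have hrs_abs : |r - s| ≤ h :=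
    abs_le.2 (by constructor <;> linarith [hr.1, hr.2, hs.1, hs.2])
  rw [edist_dist, Real.dist_eq]
  exact ENNReal.ofReal_le_ofReal
    (abs_inner_smul_sub_smul_le hu hue (h_dist x hx y hy) (h_dist y hy e he) hr_abs hrs_abs)

variable [FiniteDimensional ℝ E]

lemma exists_orthonormalBasis_apply_eq {e : E} (he : ‖e‖ = 1) :
    ∃ (b : OrthonormalBasis (Fin (finrank ℝ E)) ℝ E) (i : Fin (finrank ℝ E)), b i = e := by
  have : Nontrivial E := ⟨e, 0, fun h => by simp [h] at he⟩
  let i : Fin (finrank ℝ E) := ⟨0, finrank_pos⟩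
  have h_orthonormal : Orthonormal ℝ (({i} : Set (Fin (finrank ℝ E))).domRestrict fun _ => e) :=
    ⟨fun _ => he, fun _ _ h => (h (Subsingleton.elim _ _)).elim⟩
  obtain ⟨b, hb⟩ := h_orthonormal.exists_orthonormalBasis_extension_of_card_eq (by simp)
  exact ⟨b, i, hb i rfl⟩

variable [MeasurableSpace E] [BorelSpace E]

lemma volume_le_prod_ediam_image_inner {ι : Type*} [Fintype ι] (b : OrthonormalBasis ι ℝ E)
    (K : Set E) : volume K ≤ ∏ i, ediam ((fun x => inner ℝ (b i) x) '' K) := by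
  let f : E ≃ᵐ (ι → ℝ) := b.measurableEquiv.trans (MeasurableEquiv.toLp 2 _).symm
  have hf : MeasurePreserving f volume volume :=
    (EuclideanSpace.volume_preserving_symm_measurableEquiv_toLp ι).comp
      b.measurePreserving_measurableEquiv
  have h_eval (i : ι) : Function.eval i '' (f '' K) = (fun x => inner ℝ (b i) x) '' K := by
    rw [image_image]
    exact image_congr fun x _ => b.repr_apply_apply x i
  calc volume K = volume (f '' K) := by
        rw [← hf.measure_preimage_equiv, preimage_image_eq _ f.injective]
    _ ≤ ∏ i, ediam (Function.eval i '' (f '' K)) := Real.volume_pi_le_prod_diam _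
    _ = ∏ i, ediam ((fun x => inner ℝ (b i) x) '' K) := by simp only [h_eval]

/-- The shell sector over `U` lies in a box with sides parallel and orthogonal to a point of `U`. -/
lemma volume_Ioo_smul_le {U : Set (sphere (0 : E) 1)} {d h : ℝ} (hd : d ≤ h)
    (h1 : h < 1) (hU : ∀ x ∈ U, ∀ y ∈ U, dist x y ≤ d) :
    volume (Ioo (1 - h) 1 • (Subtype.val '' U)) ≤
      ENNReal.ofReal (h * (1 + h) * (d * (1 + h)) ^ (finrank ℝ E - 1)) := by
  rcases U.eq_empty_or_nonempty with rfl | ⟨e, he⟩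
  · simp
  have hd0 : 0 ≤ d := dist_nonneg.trans (hU e he e he)
  obtain ⟨b, i, hb⟩ := exists_orthonormalBasis_apply_eq (norm_eq_of_mem_sphere e)
  set K := Ioo (1 - h) 1 • (Subtype.val '' U)
  have h_radial : ediam ((fun x => inner ℝ (b i) x) '' K) ≤ ENNReal.ofReal (h * (1 + h)) :=
    hb ▸ ediam_image_inner_Ioo_smul_le h1 fun x hx => (hU x hx e he).trans hd
  have h_tangential (j) (hj : j ≠ i) :
      ediam ((fun x => inner ℝ (b j) x) '' K) ≤ ENNReal.ofReal (d * (1 + h)) :=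
    ediam_image_inner_Ioo_smul_le_of_inner_eq_zero (b.orthonormal.1 j)
      (hb ▸ b.orthonormal.2 hj) he h1 hU
  calc volume K ≤ ∏ j, ediam ((fun x => inner ℝ (b j) x) '' K) :=
        volume_le_prod_ediam_image_inner b K
    _ = ediam ((fun x => inner ℝ (b i) x) '' K) *
          ∏ j ∈ Finset.univ.erase i, ediam ((fun x => inner ℝ (b j) x) '' K) :=
        (Finset.mul_prod_erase _ _ (Finset.mem_univ i)).symm
    _ ≤ ENNReal.ofReal (h * (1 + h)) * ENNReal.ofReal (d * (1 + h)) ^ (finrank ℝ E - 1) := by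
        refine mul_le_mul' h_radial ((Finset.prod_le_pow_card _ _ _ fun j hj =>
          h_tangential j (Finset.ne_of_mem_erase hj)).trans_eq ?_)
        simp [Finset.card_erase_of_mem]
    _ = ENNReal.ofReal (h * (1 + h) * (d * (1 + h)) ^ (finrank ℝ E - 1)) := by
        have : 0 ≤ d * (1 + h) := mul_nonneg hd0 (by linarith)
        rw [ENNReal.ofReal_mul' (pow_nonneg this _), ENNReal.ofReal_pow this]

end InnerProductSpace

lemma ofReal_le_volumeIoiPow_Ioo {a : ℝ} (ha : 0 < a) (b : ℝ) (k : ℕ) :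
    ENNReal.ofReal ((b - a) * a ^ k) ≤ volumeIoiPow k ((↑) ⁻¹' Ioo a b) := calc
  ENNReal.ofReal ((b - a) * a ^ k) = ∫⁻ _ in Ioo a b, ENNReal.ofReal (a ^ k) := by
    rw [setLIntegral_const, Real.volume_Ioo, ENNReal.ofReal_mul' (by positivity), mul_comm]
  _ ≤ ∫⁻ r in Ioo a b, ENNReal.ofReal (r ^ k) :=
    setLIntegral_mono' measurableSet_Ioo fun r hr =>
      ENNReal.ofReal_le_ofReal (pow_le_pow_left₀ ha.le hr.1.le k)
  _ = volumeIoiPow k ((↑) ⁻¹' Ioo a b) := by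
    rw [volumeIoiPow, withDensity_apply _ (measurable_subtype_coe measurableSet_Ioo),
      setLIntegral_subtype measurableSet_Ioi _ fun r => ENNReal.ofReal (r ^ k),
      Subtype.image_preimage_coe,
      inter_eq_right.2 (show Ioo a b ⊆ Ioi 0 from fun r hr => ha.trans hr.1)]

variable {E : Type*} [NormedAddCommGroup E] [InnerProductSpace ℝ E] [FiniteDimensional ℝ E]
  [Nontrivial E] [MeasurableSpace E] [BorelSpace E]

lemma toSphere_mul_le_of_dist_le {s : Set (sphere (0 : E) 1)} {d h : ℝ} (h1 : h < 1)
    (hdh : d ≤ h) (hs : ∀ x ∈ s, ∀ y ∈ s, dist x y ≤ d) :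
    (volume : Measure E).toSphere s * ENNReal.ofReal (h * (1 - h) ^ (finrank ℝ E - 1)) ≤
      ENNReal.ofReal (h * (1 + h) * (d * (1 + h)) ^ (finrank ℝ E - 1)) := calc
  _ ≤ (volume : Measure E).toSphere s *
        volumeIoiPow (finrank ℝ E - 1) ((↑) ⁻¹' Ioo (1 - h) 1) := by
      gcongr
      simpa using ofReal_le_volumeIoiPow_Ioo (sub_pos.2 h1) 1 (finrank ℝ E - 1)
  _ ≤ volume (Ioo (1 - h) 1 • (Subtype.val '' s)) := by
      simpa using mul_volumeIoiPow_le_polarMeasure (volume : Measure E).toSphere (Ioo (1 - h) 1) s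
  _ ≤ _ := volume_Ioo_smul_le hdh h1 hs

lemma smul_toSphere_le_hausdorffMeasure {h : ℝ} (h0 : 0 < h) (h1 : h < 1) :
    ENNReal.ofReal ((1 - h) ^ (finrank ℝ E - 1) / (1 + h) ^ finrank ℝ E) •
      (volume : Measure E).toSphere ≤ μH[(finrank ℝ E : ℝ) - 1] := by
  refine le_hausdorffMeasure _ _ (ENNReal.ofReal h) (by simpa using h0) fun s hs => ?_
  have hs_ne_top : ediam s ≠ ⊤ := (hs.trans_lt ENNReal.ofReal_lt_top).ne
  set d := diam s
  have hd0 : 0 ≤ d := diam_nonneg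
  have hd : ediam s = ENNReal.ofReal d := (ENNReal.ofReal_toReal hs_ne_top).symm
  have hdh : d ≤ h := ENNReal.toReal_le_of_le_ofReal h0.le hs
  have h_dist : ∀ x ∈ s, ∀ y ∈ s, dist x y ≤ d := fun x hx y hy =>
    dist_le_diam_of_mem' hs_ne_top hx hy
  obtain ⟨k, hk⟩ : ∃ k, finrank ℝ E = k + 1 := Nat.exists_eq_succ_of_ne_zero finrank_pos.ne'
  have h_cone := toSphere_mul_le_of_dist_le h1 hdh h_dist
  simp only [hk, Nat.add_sub_cancel, Nat.cast_add, Nat.cast_one, add_sub_cancel_right] at h_cone ⊢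
  have h1h : 0 < 1 - h := sub_pos.2 h1
  calc ENNReal.ofReal ((1 - h) ^ k / (1 + h) ^ (k + 1)) * (volume : Measure E).toSphere s
      = ENNReal.ofReal (1 / (h * (1 + h) ^ (k + 1))) *
          ((volume : Measure E).toSphere s * ENNReal.ofReal (h * (1 - h) ^ k)) := by
        rw [mul_left_comm, ← ENNReal.ofReal_mul (by positivity), mul_comm]
        congr 2
        field_simp
    _ ≤ ENNReal.ofReal (1 / (h * (1 + h) ^ (k + 1))) *
          ENNReal.ofReal (h * (1 + h) * (d * (1 + h)) ^ k) := by gcongr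
    _ = ediam s ^ (k : ℝ) := by
        rw [← ENNReal.ofReal_mul (by positivity), hd, ENNReal.rpow_natCast,
          ← ENNReal.ofReal_pow hd0, mul_pow, pow_succ]
        congr 1
        field_simp

lemma toSphere_le_hausdorffMeasure :
    (volume : Measure E).toSphere ≤ μH[(finrank ℝ E : ℝ) - 1] := by
  intro A
  let c : ℝ → ℝ := fun h => (1 - h) ^ (finrank ℝ E - 1) / (1 + h) ^ finrank ℝ E
  have hc : Tendsto c (𝓝[>] 0) (𝓝 1) := by
    have : ContinuousAt c 0 := .div (by fun_prop) (by fun_prop) (by simp)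
    simpa [c] using this.tendsto.mono_left nhdsWithin_le_nhds
  have h_lim : Tendsto (fun h => ENNReal.ofReal (c h) * (volume : Measure E).toSphere A) (𝓝[>] 0)
      (𝓝 ((volume : Measure E).toSphere A)) := by
    simpa using ENNReal.Tendsto.mul_const (ENNReal.tendsto_ofReal hc) (.inl (by simp))
  refine le_of_tendsto h_lim ?_
  filter_upwards [Ioo_mem_nhdsGT zero_lt_one] with h hh
  exact smul_toSphere_le_hausdorffMeasure hh.1 hh.2 A

end SphereLowerBound

section SphericalIntegral

open Set Module Measure
open scoped NNReal Pointwise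

section NormedSpace

variable {E : Type*} [NormedAddCommGroup E] [NormedSpace ℝ E]

lemma inter_sphere_eq_smul_image_coe (s : Set E) {r : ℝ} (hr : 0 < r) :
    s ∩ sphere 0 r = r • (Subtype.val '' ((fun ω : sphere (0 : E) 1 => r • ω.1) ⁻¹' s)) := by
  ext x
  constructor
  · rintro ⟨hxs, hx⟩
    have hx_norm : ‖x‖ = r := by simpa using hx
    have h_unit : r⁻¹ • x ∈ sphere (0 : E) 1 := by
      simp [norm_smul, hx_norm, abs_of_pos hr, hr.ne']
    exact ⟨r⁻¹ • x, ⟨⟨r⁻¹ • x, h_unit⟩, by simpa [smul_smul, hr.ne'] using hxs, rfl⟩,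
      by simp [smul_smul, hr.ne']⟩
  · rintro ⟨_, ⟨ω, hω, rfl⟩, rfl⟩
    exact ⟨hω, by simp [norm_smul, abs_of_pos hr]⟩

variable [MeasurableSpace E] [BorelSpace E]

lemma setIntegral_sphere_hausdorffMeasure {F : Type*} [NormedAddCommGroup F] [NormedSpace ℝ F]
    {d : ℝ} (hd : 0 ≤ d) {r : ℝ} (hr : 0 < r) (f : E → F) :
    ∫ x in sphere (0 : E) r, f x ∂μH[d] = r ^ d • ∫ ω : sphere (0 : E) 1, f (r • ω.1) ∂μH[d] := by
  have h_emb : MeasurableEmbedding fun ω : sphere (0 : E) 1 => r • ω.1 :=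
    (Homeomorph.smulOfNeZero r hr.ne').measurableEmbedding.comp
      (.subtype_coe isClosed_sphere.measurableSet)
  have h_restrict : (μH[d] : Measure E).restrict (sphere 0 r) =
      ENNReal.ofReal (r ^ d) • (μH[d] : Measure (sphere (0 : E) 1)).map fun ω => r • ω.1 := by
    ext s hs
    rw [restrict_apply hs, Measure.smul_apply, h_emb.map_apply, smul_eq_mul,
      inter_sphere_eq_smul_image_coe s hr, hausdorffMeasure_smul_image_coe_sphere hd hr]
  rw [h_restrict, integral_smul_measure, h_emb.integral_map,
    ENNReal.toReal_ofReal (Real.rpow_nonneg hr.le d)]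

variable [FiniteDimensional ℝ E] [Nontrivial E]

lemma polarMeasure_hausdorffMeasure_le :
    polarMeasure (μH[(finrank ℝ E : ℝ) - 1] : Measure (sphere (0 : E) 1)) ≤ μH[finrank ℝ E] := by
  simpa using polarMeasure_mono (hausdorffMeasure_le_toSphere (E := E))

variable {F : Type*} [NormedAddCommGroup F] {f : E → F} {μ : Measure E} [μ.IsAddHaarMeasure]

lemma integrable_polarMeasure_hausdorffMeasure (hf : Integrable f μ) :
    Integrable f (polarMeasure μH[(finrank ℝ E : ℝ) - 1]) := by
  have h_haar : Integrable f μH[finrank ℝ E] := by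
    rw [isAddLeftInvariant_eq_smul (μH[finrank ℝ E] : Measure E) μ]
    exact hf.smul_measure ENNReal.coe_ne_top
  exact h_haar.mono_measure polarMeasure_hausdorffMeasure_le

variable [NormedSpace ℝ F]

lemma pow_smul_integral_hausdorffMeasure_eq_setIntegral_sphere (f : E → F) {r : ℝ} (hr : 0 < r) :
    r ^ (finrank ℝ E - 1) • ∫ ω : sphere (0 : E) 1, f (r • ω.1) ∂μH[(finrank ℝ E : ℝ) - 1] =
      ∫ x in sphere (0 : E) r, f x ∂μH[(finrank ℝ E : ℝ) - 1] := by
  rw [setIntegral_sphere_hausdorffMeasure finrank_sub_one_nonneg hr, ← Real.rpow_natCast,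
    Nat.cast_pred finrank_pos]

lemma integrableOn_setIntegral_sphere (hf : Integrable f μ) :
    IntegrableOn (fun r => ∫ x in sphere (0 : E) r, f x ∂μH[(finrank ℝ E : ℝ) - 1]) (Ioi 0) :=
  (integrableOn_polar_of_integrable (integrable_polarMeasure_hausdorffMeasure hf)).congr_fun
    (fun _ hr => pow_smul_integral_hausdorffMeasure_eq_setIntegral_sphere f hr) measurableSet_Ioi

lemma integral_polarMeasure_hausdorffMeasure (hf : Integrable f μ) :
    ∫ x, f x ∂polarMeasure μH[(finrank ℝ E : ℝ) - 1] =
      ∫ r in Ioi 0, ∫ x in sphere (0 : E) r, f x ∂μH[(finrank ℝ E : ℝ) - 1] := by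
  rw [integral_polarMeasure (integrable_polarMeasure_hausdorffMeasure hf)]
  exact setIntegral_congr_fun measurableSet_Ioi fun _ hr =>
    pow_smul_integral_hausdorffMeasure_eq_setIntegral_sphere f hr

end NormedSpace

theorem integral_le_integral_setIntegral_sphere {E : Type*} [NormedAddCommGroup E]
    [InnerProductSpace ℝ E] [FiniteDimensional ℝ E] [Nontrivial E] [MeasurableSpace E]
    [BorelSpace E] {f : E → ℝ} (hf : Integrable f) (hf0 : 0 ≤ f) :
    ∫ x, f x ≤ ∫ r in Ioi 0, ∫ x in sphere (0 : E) r, f x ∂μH[(finrank ℝ E : ℝ) - 1] := by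
  have h_volume :
      volume ≤ polarMeasure (μH[(finrank ℝ E : ℝ) - 1] : Measure (sphere (0 : E) 1)) := by
    simpa using polarMeasure_mono (toSphere_le_hausdorffMeasure (E := E))
  rw [← integral_polarMeasure_hausdorffMeasure hf]
  exact integral_mono_measure h_volume (.of_forall hf0)
    (integrable_polarMeasure_hausdorffMeasure hf)

end SphericalIntegral

section RadialCutoff

open Set Module Filter Topology

section CompNorm

variable {E F : Type*} [NormedAddCommGroup E]

lemma comp_norm_eventuallyEq_const {ζ : ℝ → F} {c : F} (h0 : ζ =ᶠ[𝓝 0] fun _ => c) :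
    (fun x : E => ζ ‖x‖) =ᶠ[𝓝 0] fun _ => c :=
  tendsto_norm_zero.eventually h0

variable [InnerProductSpace ℝ E] [NormedAddCommGroup F] [NormedSpace ℝ F] {ζ : ℝ → F} {c : F}

lemma contDiff_comp_norm {n : WithTop ℕ∞} (hζ : ContDiff ℝ n ζ) (h0 : ζ =ᶠ[𝓝 0] fun _ => c) :
    ContDiff ℝ n fun x : E => ζ ‖x‖ := by
  refine contDiff_iff_contDiffAt.2 fun x => ?_
  rcases eq_or_ne x 0 with rfl | hx
  · exact contDiffAt_const.congr_of_eventuallyEq (comp_norm_eventuallyEq_const h0)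
  · exact hζ.contDiffAt.comp x (contDiffAt_norm ℝ hx)

lemma norm_fderiv_comp_norm_le (hζ : Differentiable ℝ ζ) (h0 : ζ =ᶠ[𝓝 0] fun _ => c) (x : E) :
    ‖fderiv ℝ (fun y : E => ζ ‖y‖) x‖ ≤ ‖deriv ζ ‖x‖‖ := by
  rcases eq_or_ne x 0 with rfl | hx
  · simp [(comp_norm_eventuallyEq_const h0).fderiv_eq]
  · have h_lip : ‖fderiv ℝ (fun y : E => ‖y‖) x‖ ≤ 1 := by
      simpa using norm_fderiv_le_of_lipschitz ℝ (x₀ := x) (lipschitzWith_one_norm (E := E))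
    rw [fderiv_fun_comp x (hζ ‖x‖) (differentiableAt_id.norm ℝ hx), norm_deriv_eq_norm_fderiv]
    exact (ContinuousLinearMap.opNorm_comp_le _ _).trans
      (mul_le_of_le_one_right (norm_nonneg _) h_lip)

end CompNorm

lemma hasDerivAt_setIntegral_Ioi {F : Type*} [NormedAddCommGroup F] [NormedSpace ℝ F]
    [CompleteSpace F] {φ : ℝ → F} (hφ : Continuous φ) (h_int : Integrable φ) (r : ℝ) :
    HasDerivAt (fun s => ∫ t in Ioi s, φ t) (-φ r) r := by
  have h_split : (fun s => ∫ t in Ioi s, φ t) =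
      fun s => (∫ t in Ioi 0, φ t) - ∫ t in (0 : ℝ)..s, φ t := by
    funext s
    rw [← intervalIntegral.integral_Ioi_sub_Ioi' h_int.integrableOn h_int.integrableOn,
      sub_sub_cancel]
  rw [h_split]
  exact (hφ.integral_hasStrictDerivAt 0 r).hasDerivAt.const_sub _

/-- Admissible test functions for a weighted energy on `U`. On an interval, `φ / ∫ φ` is the slope
`-ζ'` of a radial cutoff `ζ ‖x‖`. -/
structure IsTestProfile {X : Type*} [TopologicalSpace X] (U : Set X) (φ : X → ℝ) : Prop where
  continuous : Continuous φ
  nonneg : 0 ≤ φ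
  hasCompactSupport : HasCompactSupport φ
  tsupport_subset : tsupport φ ⊆ U

namespace IsTestProfile

section Basic

variable {X : Type*} [TopologicalSpace X] {U : Set X} {φ : X → ℝ}

lemma eq_zero_of_notMem (hφ : IsTestProfile U φ) {x : X} (hx : x ∉ U) : φ x = 0 :=
  image_eq_zero_of_notMem_tsupport fun h => hx (hφ.tsupport_subset h)

lemma integrable [MeasurableSpace X] [OpensMeasurableSpace X] {μ : Measure X}
    [IsFiniteMeasureOnCompacts μ] (hφ : IsTestProfile U φ) : Integrable φ μ :=
  hφ.continuous.integrable_of_hasCompactSupport hφ.hasCompactSupport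

end Basic

variable {ρ σ : ℝ} {φ : ℝ → ℝ}

lemma setIntegral_Ioi_eq_integral (hφ : IsTestProfile (Ioo ρ σ) φ) {r : ℝ} (hr : r ≤ ρ) :
    ∫ t in Ioi r, φ t = ∫ t, φ t :=
  setIntegral_eq_integral_of_forall_compl_eq_zero fun _ ht =>
    hφ.eq_zero_of_notMem fun h => ht (hr.trans_lt h.1)

lemma exists_lt_setIntegral_Ioi_eq_zero (hφ : IsTestProfile (Ioo ρ σ) φ) :
    ∃ b < σ, ∀ r, b ≤ r → ∫ t in Ioi r, φ t = 0 := by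
  obtain ⟨b, hbσ, hb⟩ : ∃ b < σ, ∀ t ∈ tsupport φ, t ≤ b := by
    rcases (tsupport φ).eq_empty_or_nonempty with h_empty | h_nonempty
    · exact ⟨σ - 1, by linarith, by simp [h_empty]⟩
    · obtain ⟨b, hb, hb_max⟩ := hφ.hasCompactSupport.isCompact.exists_isGreatest h_nonempty
      exact ⟨b, (hφ.tsupport_subset hb).2, hb_max⟩
  refine ⟨b, hbσ, fun r hr => setIntegral_eq_zero_of_forall_eq_zero fun t ht => ?_⟩
  exact image_eq_zero_of_notMem_tsupport fun h => ((hb t h).trans hr).not_gt ht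

lemma hasDerivAt_setIntegral_Ioi_div (hφ : IsTestProfile (Ioo ρ σ) φ) (r : ℝ) :
    HasDerivAt (fun s => (∫ t in Ioi s, φ t) / ∫ t, φ t) (-φ r / ∫ t, φ t) r :=
  (hasDerivAt_setIntegral_Ioi hφ.continuous hφ.integrable r).div_const _

lemma contDiff_setIntegral_Ioi_div (hφ : IsTestProfile (Ioo ρ σ) φ) :
    ContDiff ℝ 1 fun s => (∫ t in Ioi s, φ t) / ∫ t, φ t := by
  refine contDiff_one_iff_deriv.2
    ⟨fun r => (hφ.hasDerivAt_setIntegral_Ioi_div r).differentiableAt, ?_⟩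
  rw [show deriv (fun s => (∫ t in Ioi s, φ t) / ∫ t, φ t) = fun r => -φ r / ∫ t, φ t from
    funext fun r => (hφ.hasDerivAt_setIntegral_Ioi_div r).deriv]
  exact hφ.continuous.neg.div_const _

variable {E : Type*} [NormedAddCommGroup E] [InnerProductSpace ℝ E] [FiniteDimensional ℝ E]

theorem exists_radial_cutoff (hφ : IsTestProfile (Ioo ρ σ) φ) (hρ : 0 < ρ) (hc : 0 < ∫ t, φ t) :
    ∃ η : E → ℝ, ContDiff ℝ 1 η ∧ HasCompactSupport η ∧ tsupport η ⊆ ball 0 σ ∧ (∀ x, 0 ≤ η x) ∧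
      (∀ x ∈ ball (0 : E) ρ, η x = 1) ∧ ∀ x, ‖fderiv ℝ η x‖ ≤ φ ‖x‖ / ∫ t, φ t := by
  set ζ : ℝ → ℝ := fun s => (∫ t in Ioi s, φ t) / ∫ t, φ t with hζ
  have h_one {r : ℝ} (hr : r ≤ ρ) : ζ r = 1 := by
    simp only [hζ, hφ.setIntegral_Ioi_eq_integral hr, div_self hc.ne']
  have h_near : ζ =ᶠ[𝓝 0] fun _ => 1 := by
    filter_upwards [Iic_mem_nhds hρ] with r hr using h_one hr
  obtain ⟨b, hbσ, hb⟩ := hφ.exists_lt_setIntegral_Ioi_eq_zero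
  have h_supp : tsupport (fun x : E => ζ ‖x‖) ⊆ closedBall 0 b := by
    refine closure_minimal (fun x hx => ?_) isClosed_closedBall
    by_contra hxb
    rw [mem_closedBall_zero_iff, not_le] at hxb
    exact hx (by simp only [hζ, hb _ hxb.le, zero_div])
  refine ⟨fun x => ζ ‖x‖, contDiff_comp_norm hφ.contDiff_setIntegral_Ioi_div h_near,
    .of_support_subset_isCompact (isCompact_closedBall 0 b) (subset_closure.trans h_supp),
    h_supp.trans (closedBall_subset_ball hbσ),
    fun x => div_nonneg (setIntegral_nonneg measurableSet_Ioi fun t _ => hφ.nonneg t) hc.le,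
    fun x hx => h_one (mem_ball_zero_iff.1 hx).le, fun x => ?_⟩
  calc ‖fderiv ℝ (fun y : E => ζ ‖y‖) x‖ ≤ ‖deriv ζ ‖x‖‖ :=
        norm_fderiv_comp_norm_le
          (fun r => (hφ.hasDerivAt_setIntegral_Ioi_div r).differentiableAt) h_near x
    _ = φ ‖x‖ / ∫ t, φ t := by
        rw [(hφ.hasDerivAt_setIntegral_Ioi_div ‖x‖).deriv, norm_div, norm_neg,
          Real.norm_of_nonneg (hφ.nonneg _), Real.norm_of_nonneg hc.le]

end IsTestProfile

end RadialCutoff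

section CutoffEnergy

open Set Module

lemma setIntegral_abs_mul_sq_nonneg {X : Type*} [MeasureSpace X] (v g : X → ℝ) (s : Set X) :
    0 ≤ ∫ x in s, |v x| * g x ^ 2 :=
  integral_nonneg fun _ => by positivity

lemma setIntegral_sphere_mul_comp_norm {E : Type*} [NormedAddCommGroup E] [MeasurableSpace E]
    [OpensMeasurableSpace E] (w : E → ℝ) (f : ℝ → ℝ) (μ : Measure E) (r : ℝ) :
    ∫ x in sphere 0 r, w x * f ‖x‖ ∂μ = f r * ∫ x in sphere 0 r, w x ∂μ := by
  rw [← integral_const_mul]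
  refine setIntegral_congr_fun isClosed_sphere.measurableSet fun x hx => ?_
  simp only [mem_sphere_zero_iff_norm.1 hx, mul_comm]

variable {E : Type*} [NormedAddCommGroup E] [InnerProductSpace ℝ E] [FiniteDimensional ℝ E]
  [MeasurableSpace E] [BorelSpace E]

/-- The infimum `J(ρ, σ, v)` of the weighted Dirichlet energies of the `C¹` cutoffs between the
balls of radii `ρ` and `σ`. -/
noncomputable def minCutoffEnergy (v : E → ℝ) (ρ σ : ℝ) : ℝ :=
  sInf {J : ℝ | ∃ η : E → ℝ, ContDiff ℝ 1 η ∧ HasCompactSupport η ∧ tsupport η ⊆ ball 0 σ ∧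
    (∀ x, 0 ≤ η x) ∧ (∀ x ∈ ball (0 : E) ρ, η x = 1) ∧
    J = ∫ x in ball (0 : E) σ, |v x| * ‖fderiv ℝ η x‖ ^ 2}

variable {v : E → ℝ} {ρ σ : ℝ}

lemma minCutoffEnergy_le {η : E → ℝ} (h_smooth : ContDiff ℝ 1 η) (h_compact : HasCompactSupport η)
    (h_supp : tsupport η ⊆ ball 0 σ) (h_nonneg : ∀ x, 0 ≤ η x)
    (h_one : ∀ x ∈ ball (0 : E) ρ, η x = 1) :
    minCutoffEnergy v ρ σ ≤ ∫ x in ball 0 σ, |v x| * ‖fderiv ℝ η x‖ ^ 2 := by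
  refine csInf_le ⟨0, ?_⟩ ⟨η, h_smooth, h_compact, h_supp, h_nonneg, h_one, rfl⟩
  rintro _ ⟨η, -, -, -, -, -, rfl⟩
  exact setIntegral_abs_mul_sq_nonneg v _ _

namespace IsTestProfile

variable {φ : ℝ → ℝ}

lemma integrable_abs_mul_sq (hφ : IsTestProfile (Ioo ρ σ) φ) (hv : IntegrableOn v (ball 0 σ)) :
    Integrable fun x => |v x| * φ ‖x‖ ^ 2 := by
  obtain ⟨M, hM⟩ := hφ.hasCompactSupport.exists_bound_of_continuous hφ.continuous
  refine (integrableOn_iff_integrable_of_support_subset (s := ball 0 σ) fun x hx => ?_).1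
    (hv.abs.mul_bdd (c := M ^ 2) ?_ (.of_forall fun x => ?_))
  · by_contra h
    have h_zero : φ ‖x‖ = 0 :=
      hφ.eq_zero_of_notMem fun h_mem => h (mem_ball_zero_iff.2 h_mem.2)
    simp [h_zero] at hx
  · exact ((hφ.continuous.comp continuous_norm).pow 2).aestronglyMeasurable
  · rw [norm_pow]
    exact pow_le_pow_left₀ (norm_nonneg _) (hM _) 2

variable [Nontrivial E]

lemma setIntegral_abs_mul_sq_le (hφ : IsTestProfile (Ioo ρ σ) φ) (hρ : 0 < ρ)
    (hv : IntegrableOn v (ball 0 σ)) :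
    ∫ x in ball 0 σ, |v x| * φ ‖x‖ ^ 2 ≤
      ∫ r in Ioo ρ σ, φ r ^ 2 * ∫ x in sphere (0 : E) r, |v x| ∂μH[(finrank ℝ E : ℝ) - 1] := by
  have h_nonneg : 0 ≤ fun x => |v x| * φ ‖x‖ ^ 2 := fun x => by positivity
  calc ∫ x in ball 0 σ, |v x| * φ ‖x‖ ^ 2
      ≤ ∫ x, |v x| * φ ‖x‖ ^ 2 :=
        setIntegral_le_integral (hφ.integrable_abs_mul_sq hv) (.of_forall h_nonneg)
    _ ≤ ∫ r in Ioi 0, ∫ x in sphere (0 : E) r, |v x| * φ ‖x‖ ^ 2 ∂μH[(finrank ℝ E : ℝ) - 1] :=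
        integral_le_integral_setIntegral_sphere (hφ.integrable_abs_mul_sq hv) h_nonneg
    _ = ∫ r in Ioi 0, φ r ^ 2 * ∫ x in sphere (0 : E) r, |v x| ∂μH[(finrank ℝ E : ℝ) - 1] := by
        simp only [setIntegral_sphere_mul_comp_norm _ fun r => φ r ^ 2]
    _ = ∫ r in Ioo ρ σ, φ r ^ 2 * ∫ x in sphere (0 : E) r, |v x| ∂μH[(finrank ℝ E : ℝ) - 1] :=
        setIntegral_eq_of_subset_of_forall_sdiff_eq_zero measurableSet_Ioi
          (fun r hr => hρ.trans hr.1) fun r hr => by simp [hφ.eq_zero_of_notMem hr.2]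

theorem minCutoffEnergy_mul_sq_le (hφ : IsTestProfile (Ioo ρ σ) φ) (hρ : 0 < ρ)
    (hv : IntegrableOn v (ball 0 σ)) :
    minCutoffEnergy v ρ σ * (∫ r, φ r) ^ 2 ≤
      ∫ r in Ioo ρ σ, φ r ^ 2 * ∫ x in sphere (0 : E) r, |v x| ∂μH[(finrank ℝ E : ℝ) - 1] := by
  refine le_trans ?_ (hφ.setIntegral_abs_mul_sq_le hρ hv)
  rcases (integral_nonneg hφ.nonneg).eq_or_lt with hc | hc
  · rw [← hc, zero_pow two_ne_zero, mul_zero]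
    exact setIntegral_abs_mul_sq_nonneg v (fun x => φ ‖x‖) (ball 0 σ)
  obtain ⟨η, h_smooth, h_compact, h_supp, h_nonneg, h_one, h_fderiv⟩ :=
    hφ.exists_radial_cutoff (E := E) hρ hc
  rw [← le_div_iff₀ (by positivity)]
  calc minCutoffEnergy v ρ σ
      ≤ ∫ x in ball 0 σ, |v x| * ‖fderiv ℝ η x‖ ^ 2 :=
        minCutoffEnergy_le h_smooth h_compact h_supp h_nonneg h_one
    _ ≤ ∫ x in ball 0 σ, |v x| * φ ‖x‖ ^ 2 / (∫ r, φ r) ^ 2 := by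
        refine integral_mono_of_nonneg (.of_forall fun x => by positivity)
          ((hφ.integrable_abs_mul_sq hv).integrableOn.div_const _) (.of_forall fun x => ?_)
        dsimp only
        rw [mul_div_assoc, ← div_pow]
        gcongr
        exact h_fderiv x
    _ = (∫ x in ball 0 σ, |v x| * φ ‖x‖ ^ 2) / (∫ r, φ r) ^ 2 := integral_div _ _

end IsTestProfile

lemma integrableOn_setIntegral_sphere_abs [Nontrivial E] (hρ : 0 ≤ ρ)
    (hv : IntegrableOn v (ball 0 σ)) :
    IntegrableOn (fun r => ∫ x in sphere (0 : E) r, |v x| ∂μH[(finrank ℝ E : ℝ) - 1])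
      (Ioo ρ σ) := by
  have h_int : Integrable ((ball (0 : E) σ).indicator fun x => |v x|) :=
    IntegrableOn.integrable_indicator hv.abs isOpen_ball.measurableSet
  refine ((integrableOn_setIntegral_sphere h_int).mono_set fun r hr => hρ.trans_lt hr.1).congr_fun
    (fun r hr => setIntegral_congr_fun isClosed_sphere.measurableSet fun x hx => ?_)
    measurableSet_Ioo
  exact indicator_of_mem (mem_ball_zero_iff.2 ((mem_sphere_zero_iff_norm.1 hx).trans_lt hr.2)) _

end CutoffEnergy

section Mollification

open Set Filter Topology
open scoped Convolution Pointwise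

lemma locallyIntegrable_of_forall_mem_Icc {X : Type*} [TopologicalSpace X] [MeasurableSpace X]
    {μ : Measure X} [IsLocallyFiniteMeasure μ] {f : X → ℝ} {M : ℝ} (hf : AEStronglyMeasurable f μ)
    (hfM : ∀ x, f x ∈ Icc 0 M) : LocallyIntegrable f μ :=
  (locallyIntegrable_const M).mono hf <| .of_forall fun x => by
    rw [Real.norm_of_nonneg (hfM x).1, Real.norm_of_nonneg ((hfM x).1.trans (hfM x).2)]
    exact (hfM x).2

variable {G : Type*} [NormedAddCommGroup G] [NormedSpace ℝ G] [FiniteDimensional ℝ G]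
  [MeasurableSpace G] [BorelSpace G] {μ : Measure G} [μ.IsAddHaarMeasure] {f : G → ℝ} {M : ℝ}

lemma normed_convolution_mem_Icc (φ : ContDiffBump (0 : G)) (hf : AEStronglyMeasurable f μ)
    (hfM : ∀ x, f x ∈ Icc 0 M) (x : G) : (φ.normed μ ⋆[.lsmul ℝ ℝ, μ] f) x ∈ Icc 0 M := by
  have h_nonneg (t : G) : 0 ≤ φ.normed μ t := φ.nonneg_normed t
  have h_int : Integrable (fun t => φ.normed μ t • f (x - t)) μ :=
    φ.hasCompactSupport_normed.convolutionExists_left (.lsmul ℝ ℝ) φ.continuous_normed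
      (locallyIntegrable_of_forall_mem_Icc hf hfM) x
  rw [convolution_lsmul]
  constructor
  · exact integral_nonneg fun t => mul_nonneg (h_nonneg t) (hfM _).1
  · calc ∫ t, φ.normed μ t • f (x - t) ∂μ ≤ ∫ t, φ.normed μ t * M ∂μ :=
          integral_mono h_int (φ.integrable_normed.mul_const M) fun t =>
            mul_le_mul_of_nonneg_left (hfM _).2 (h_nonneg t)
      _ = M := by rw [integral_mul_const, φ.integral_normed, one_mul]

lemma tsupport_normed_convolution_subset (φ : ContDiffBump (0 : G)) {K : Set G} (hK : IsCompact K)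
    (hfK : Function.support f ⊆ K) :
    tsupport (φ.normed μ ⋆[.lsmul ℝ ℝ, μ] f) ⊆ cthickening φ.rOut K := by
  refine closure_minimal ?_ isClosed_cthickening
  rw [← hK.add_closedBall_zero φ.rOut_pos.le]
  refine (support_convolution_subset_swap _).trans (add_subset_add hfK ?_)
  rw [φ.support_normed_eq]
  exact ball_subset_closedBall

theorem exists_isTestProfile_tendsto_ae (hf : AEStronglyMeasurable f μ) (hfM : ∀ x, f x ∈ Icc 0 M)
    {K U : Set G} (hK : IsCompact K) (hfK : Function.support f ⊆ K) (hU : IsOpen U) (hKU : K ⊆ U) :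
    ∃ g : ℕ → G → ℝ, (∀ n, IsTestProfile U (g n)) ∧ (∀ n x, g n x ≤ M) ∧
      ∀ᵐ x ∂μ, Tendsto (fun n => g n x) atTop (𝓝 (f x)) := by
  obtain ⟨r, hr, hrU⟩ := hK.exists_cthickening_subset_open hU hKU
  have h_loc := locallyIntegrable_of_forall_mem_Icc hf hfM
  let φ (n : ℕ) : ContDiffBump (0 : G) :=
    { rIn := r / (n + 1) / 2
      rOut := r / (n + 1)
      rIn_pos := by positivity
      rIn_lt_rOut := half_lt_self (by positivity) }
  have h_rOut : Tendsto (fun n => (φ n).rOut) atTop (𝓝 0) := by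
    simpa [φ, Function.comp_def] using
      (tendsto_const_div_atTop_nhds_zero_nat r).comp (tendsto_add_atTop_nat 1)
  have h_rOut_le (n : ℕ) : (φ n).rOut ≤ r := div_le_self hr.le (by simp)
  have h_supp (n : ℕ) : tsupport ((φ n).normed μ ⋆[.lsmul ℝ ℝ, μ] f) ⊆ cthickening r K :=
    (tsupport_normed_convolution_subset (φ n) hK hfK).trans (cthickening_mono (h_rOut_le n) K)
  refine ⟨fun n => (φ n).normed μ ⋆[.lsmul ℝ ℝ, μ] f, fun n => ?_,
    fun n x => (normed_convolution_mem_Icc (φ n) hf hfM x).2,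
    ContDiffBump.ae_convolution_tendsto_right_of_locallyIntegrable (K := 2) h_rOut
      (.of_forall fun n => by simp only [φ]; linarith) h_loc⟩
  exact
    { continuous := (φ n).hasCompactSupport_normed.continuous_convolution_left _
        (φ n).continuous_normed h_loc
      nonneg := fun x => (normed_convolution_mem_Icc (φ n) hf hfM x).1
      hasCompactSupport := hK.cthickening.of_isClosed_subset (isClosed_tsupport _) (h_supp n)
      tsupport_subset := (h_supp n).trans hrU }

end Mollification

section ReverseHolder

open ENNReal

theorem measure_univ_rpow_le_lintegral_rpow_mul_lintegral_inv {α : Type*} [MeasurableSpace α]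
    {μ : Measure α} {f : α → ℝ≥0∞} (hf : AEMeasurable f μ) (hf0 : ∀ᵐ x ∂μ, f x ≠ 0)
    (hf_top : ∀ᵐ x ∂μ, f x ≠ ∞) {δ : ℝ} (hδ : 0 < δ) :
    μ Set.univ ^ (1 + 1 / δ) ≤ (∫⁻ x, f x ^ δ ∂μ) ^ (1 / δ) * ∫⁻ x, (f x)⁻¹ ∂μ := by
  have h_conj : (1 + δ).HolderConjugate ((1 + δ) / δ) := by
    rw [Real.holderConjugate_iff]
    constructor
    · linarith
    · field_simp
  have h_one : ∀ᵐ x ∂μ, f x ^ (δ / (1 + δ)) * (f x)⁻¹ ^ (δ / (1 + δ)) = 1 := by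
    filter_upwards [hf0, hf_top] with x h0 h_top
    rw [← mul_rpow_of_nonneg _ _ (by positivity), ENNReal.mul_inv_cancel h0 h_top, one_rpow]
  have h_holder : μ Set.univ ≤
      (∫⁻ x, f x ^ δ ∂μ) ^ (1 / (1 + δ)) * (∫⁻ x, (f x)⁻¹ ∂μ) ^ (δ / (1 + δ)) := by
    calc μ Set.univ = ∫⁻ x, f x ^ (δ / (1 + δ)) * (f x)⁻¹ ^ (δ / (1 + δ)) ∂μ := by
          rw [lintegral_congr_ae h_one, lintegral_one]
      _ ≤ _ := lintegral_mul_le_Lp_mul_Lq μ h_conj (hf.pow_const _) (hf.inv.pow_const _)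
      _ = _ := by
          simp only [← rpow_mul, one_div_div]
          rw [div_mul_cancel₀ δ (by positivity), div_mul_div_cancel₀ (by positivity),
            div_self hδ.ne']
          simp only [rpow_one]
  calc μ Set.univ ^ (1 + 1 / δ)
      ≤ ((∫⁻ x, f x ^ δ ∂μ) ^ (1 / (1 + δ)) * (∫⁻ x, (f x)⁻¹ ∂μ) ^ (δ / (1 + δ))) ^
          (1 + 1 / δ) := by gcongr
    _ = (∫⁻ x, f x ^ δ ∂μ) ^ (1 / δ) * ∫⁻ x, (f x)⁻¹ ∂μ := by
        have h_fst : 1 / (1 + δ) * (1 + 1 / δ) = 1 / δ := by field_simp; ring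
        have h_snd : δ / (1 + δ) * (1 + 1 / δ) = 1 := by field_simp; ring
        rw [mul_rpow_of_nonneg _ _ (by positivity), ← rpow_mul, ← rpow_mul, h_fst, h_snd, rpow_one]

end ReverseHolder

section WeightedEnergy

open Set Filter Topology

/-- `J` is a lower bound for the weighted energies `∫ φ² H` of the test functions `φ` on `U` with
`∫ φ = 1`, in homogeneous form. -/
def IsWeightedEnergyBound {X : Type*} [TopologicalSpace X] [MeasurableSpace X] (μ : Measure X)
    (U : Set X) (H : X → ℝ) (J : ℝ) : Prop :=
  ∀ φ, IsTestProfile U φ → J * (∫ x in U, φ x ∂μ) ^ 2 ≤ ∫ x in U, φ x ^ 2 * H x ∂μ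

lemma inv_add_mem_Icc {a ε : ℝ} (ha : 0 ≤ a) (hε : 0 < ε) : (a + ε)⁻¹ ∈ Icc 0 ε⁻¹ :=
  ⟨inv_nonneg.2 (add_nonneg ha hε.le), inv_anti₀ hε (le_add_of_nonneg_left ha)⟩

lemma integrableOn_inv_add {X : Type*} [MeasurableSpace X] {μ : Measure X} {K : Set X} {H : X → ℝ}
    (hμK : μ K ≠ ⊤) (hH : AEMeasurable H (μ.restrict K)) (hH0 : 0 ≤ H) {ε : ℝ} (hε : 0 < ε) :
    IntegrableOn (fun x => (H x + ε)⁻¹) K μ :=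
  .of_bound hμK.lt_top (hH.add_const ε).inv.aestronglyMeasurable ε⁻¹ <| .of_forall fun x => by
    rw [Real.norm_of_nonneg (inv_add_mem_Icc (hH0 x) hε).1]
    exact (inv_add_mem_Icc (hH0 x) hε).2

lemma exists_monotone_isCompact_iUnion_eq {X : Type*} [PseudoMetricSpace X] [ProperSpace X]
    {U : Set X} (hU : IsOpen U) :
    ∃ K : ℕ → Set X, (∀ n, IsCompact (K n)) ∧ Monotone K ∧ ⋃ n, K n = U := by
  rcases U.eq_empty_or_nonempty with rfl | ⟨x₀, -⟩
  · exact ⟨fun _ => ∅, fun _ => isCompact_empty, monotone_const, iUnion_empty⟩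
  obtain ⟨F, hF_closed, -, hF_iUnion, hF_mono⟩ := hU.exists_iUnion_isClosed
  have h_ball_mono : Monotone fun n : ℕ => closedBall x₀ n :=
    fun _ _ h => closedBall_subset_closedBall (Nat.cast_le.2 h)
  refine ⟨fun n => F n ∩ closedBall x₀ n,
    fun n => (isCompact_closedBall x₀ n).inter_left (hF_closed n), hF_mono.inter h_ball_mono, ?_⟩
  rw [iUnion_inter_of_monotone hF_mono h_ball_mono, hF_iUnion, iUnion_closedBall_nat, inter_univ]

variable {G : Type*} [NormedAddCommGroup G] [NormedSpace ℝ G] [FiniteDimensional ℝ G]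
  [MeasurableSpace G] [BorelSpace G] {μ : Measure G} [μ.IsAddHaarMeasure] {U : Set G} {H : G → ℝ}
  {J : ℝ}

namespace IsWeightedEnergyBound

lemma mul_sq_setIntegral_le (hJ : IsWeightedEnergyBound μ U H J) (hU : IsOpen U) (hμU : μ U ≠ ⊤)
    (hH0 : 0 ≤ H) (hH : IntegrableOn H U μ) {f : G → ℝ} (hf : AEStronglyMeasurable f μ) {M : ℝ}
    (hfM : ∀ x, f x ∈ Icc 0 M) {K : Set G} (hK : IsCompact K) (hfK : Function.support f ⊆ K)
    (hKU : K ⊆ U) :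
    J * (∫ x in U, f x ∂μ) ^ 2 ≤ ∫ x in U, f x ^ 2 * H x ∂μ := by
  obtain ⟨g, hg, hgM, h_tendsto⟩ := exists_isTestProfile_tendsto_ae hf hfM hK hfK hU hKU
  have h_tendsto_U := ae_restrict_of_ae (s := U) h_tendsto
  have h_norm_le (n : ℕ) (x : G) : ‖g n x‖ ≤ M := by
    rw [Real.norm_of_nonneg ((hg n).nonneg x)]
    exact hgM n x
  have h_lhs : Tendsto (fun n => ∫ x in U, g n x ∂μ) atTop (𝓝 (∫ x in U, f x ∂μ)) :=
    tendsto_integral_of_dominated_convergence (fun _ => M)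
      (fun n => (hg n).continuous.aestronglyMeasurable) (integrableOn_const hμU)
      (fun n => .of_forall (h_norm_le n)) h_tendsto_U
  have h_rhs : Tendsto (fun n => ∫ x in U, g n x ^ 2 * H x ∂μ) atTop
      (𝓝 (∫ x in U, f x ^ 2 * H x ∂μ)) := by
    refine tendsto_integral_of_dominated_convergence (fun x => M ^ 2 * H x)
      (fun n => ((hg n).continuous.pow 2).aestronglyMeasurable.mul hH.aestronglyMeasurable)
      (hH.const_mul _) (fun n => .of_forall fun x => ?_) ?_
    · rw [norm_mul, norm_pow, Real.norm_of_nonneg (hH0 x)]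
      have := hH0 x
      gcongr
      exact h_norm_le n x
    · filter_upwards [h_tendsto_U] with x hx using (hx.pow 2).mul_const _
  exact le_of_tendsto_of_tendsto' ((h_lhs.pow 2).const_mul J) h_rhs fun n => hJ _ (hg n)

lemma mul_setIntegral_inv_add_le_one (hJ : IsWeightedEnergyBound μ U H J) (hU : IsOpen U)
    (hμU : μ U ≠ ⊤) (hH0 : 0 ≤ H) (hH : IntegrableOn H U μ) {K : Set G} (hK : IsCompact K)
    (hKU : K ⊆ U) {ε : ℝ} (hε : 0 < ε) : J * ∫ x in K, (H x + ε)⁻¹ ∂μ ≤ 1 := by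
  have h_meas := (integrableOn_inv_add hK.measure_ne_top (hH.mono_set hKU).aemeasurable hH0 hε).1
  have h_mem (x : G) : K.indicator (fun x => (H x + ε)⁻¹) x ∈ Icc 0 ε⁻¹ :=
    ⟨indicator_nonneg (fun x _ => (inv_add_mem_Icc (hH0 x) hε).1) x,
      indicator_apply_le' (fun _ => (inv_add_mem_Icc (hH0 x) hε).2) fun _ => (inv_pos.2 hε).le⟩
  -- For given `∫ φ`, the energy `∫ φ² H` is minimised by `φ` proportional to `H⁻¹`.
  have h_energy := hJ.mul_sq_setIntegral_le hU hμU hH0 hH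
    ((aestronglyMeasurable_indicator_iff hK.measurableSet).2 h_meas) h_mem hK
    support_indicator_subset hKU
  have h_rhs : ∫ x in K, (H x + ε)⁻¹ ^ 2 * H x ∂μ ≤ ∫ x in K, (H x + ε)⁻¹ ∂μ := by
    refine integral_mono_of_nonneg (.of_forall fun x => mul_nonneg (sq_nonneg _) (hH0 x))
      (integrableOn_inv_add hK.measure_ne_top (hH.mono_set hKU).aemeasurable hH0 hε)
      (.of_forall fun x => ?_)
    have h_pos : 0 < H x + ε := add_pos_of_nonneg_of_pos (hH0 x) hε
    simp only [sq, mul_assoc]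
    refine mul_le_of_le_one_right (inv_pos.2 h_pos).le ((inv_mul_le_iff₀ h_pos).2 ?_)
    linarith
  have h_sq (x : G) : K.indicator (fun x => (H x + ε)⁻¹) x ^ 2 * H x =
      K.indicator (fun x => (H x + ε)⁻¹ ^ 2 * H x) x := by
    by_cases hx : x ∈ K <;> simp [hx]
  simp only [h_sq, setIntegral_indicator hK.measurableSet, inter_eq_right.2 hKU] at h_energy
  have h_nonneg : 0 ≤ ∫ x in K, (H x + ε)⁻¹ ∂μ :=
    integral_nonneg fun x => (inv_add_mem_Icc (hH0 x) hε).1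
  rcases h_nonneg.eq_or_lt with h_zero | h_pos
  · simp [← h_zero]
  · refine le_of_mul_le_mul_right ?_ h_pos
    rw [one_mul, mul_assoc, ← sq]
    exact h_energy.trans h_rhs

lemma setLIntegral_inv_ofReal_add_le (hJ : IsWeightedEnergyBound μ U H J) (hU : IsOpen U)
    (hμU : μ U ≠ ⊤) (hH0 : 0 ≤ H) (hH : IntegrableOn H U μ) {K : Set G} (hK : IsCompact K)
    (hKU : K ⊆ U) {ε : ℝ} (hε : 0 < ε) :
    ∫⁻ x in K, (ENNReal.ofReal (H x + ε))⁻¹ ∂μ ≤ (ENNReal.ofReal J)⁻¹ := by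
  have h_int := integrableOn_inv_add hK.measure_ne_top (hH.mono_set hKU).aemeasurable hH0 hε
  have h_nonneg (x : G) : 0 ≤ (H x + ε)⁻¹ := (inv_add_mem_Icc (hH0 x) hε).1
  have h_toReal : ∫⁻ x in K, (ENNReal.ofReal (H x + ε))⁻¹ ∂μ =
      ENNReal.ofReal (∫ x in K, (H x + ε)⁻¹ ∂μ) := by
    rw [ofReal_integral_eq_lintegral_ofReal h_int (.of_forall h_nonneg)]
    simp only [ENNReal.ofReal_inv_of_pos (add_pos_of_nonneg_of_pos (hH0 _) hε)]
  rw [h_toReal, ENNReal.le_inv_iff_mul_le, mul_comm,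
    ← ENNReal.ofReal_mul' (integral_nonneg h_nonneg)]
  exact ENNReal.ofReal_le_one.2 (hJ.mul_setIntegral_inv_add_le_one hU hμU hH0 hH hK hKU hε)

theorem setLIntegral_inv_ofReal_le (hJ : IsWeightedEnergyBound μ U H J) (hU : IsOpen U)
    (hμU : μ U ≠ ⊤) (hH0 : 0 ≤ H) (hH : IntegrableOn H U μ) :
    ∫⁻ x in U, (ENNReal.ofReal (H x))⁻¹ ∂μ ≤ (ENNReal.ofReal J)⁻¹ := by
  obtain ⟨K, hK, hK_mono, hK_iUnion⟩ := exists_monotone_isCompact_iUnion_eq hU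
  have hKU (n : ℕ) : K n ⊆ U := hK_iUnion ▸ subset_iUnion K n
  let f (n : ℕ) : G → ENNReal := (K n).indicator fun x => (ENNReal.ofReal (H x + 1 / (n + 1)))⁻¹
  have h_meas (n : ℕ) : AEMeasurable (f n) (μ.restrict U) :=
    (hH.aemeasurable.add_const _).ennreal_ofReal.inv.indicator (hK n).measurableSet
  have h_tendsto (x : G) (hx : x ∈ U) :
      Tendsto (fun n => f n x) atTop (𝓝 (ENNReal.ofReal (H x))⁻¹) := by
    have h_shift : Tendsto (fun n : ℕ => H x + 1 / ((n : ℝ) + 1)) atTop (𝓝 (H x)) := by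
      simpa using tendsto_one_div_add_atTop_nhds_zero_nat.const_add (H x)
    obtain ⟨N, hN⟩ := mem_iUnion.1 (hK_iUnion.symm ▸ hx)
    refine ((ENNReal.tendsto_ofReal h_shift).inv).congr' ?_
    filter_upwards [eventually_ge_atTop N] with n hn
    simp only [f, indicator_of_mem (hK_mono hn hN)]
  calc ∫⁻ x in U, (ENNReal.ofReal (H x))⁻¹ ∂μ
      = ∫⁻ x in U, liminf (fun n => f n x) atTop ∂μ :=
        setLIntegral_congr_fun hU.measurableSet fun x hx => (h_tendsto x hx).liminf_eq.symm
    _ ≤ liminf (fun n => ∫⁻ x in U, f n x ∂μ) atTop := lintegral_liminf_le' h_meas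
    _ ≤ (ENNReal.ofReal J)⁻¹ := by
        refine liminf_le_of_le (by isBoundedDefault) fun b hb => ?_
        obtain ⟨n, hn⟩ := hb.exists
        refine hn.trans ?_
        rw [setLIntegral_indicator (hK n).measurableSet, inter_eq_left.2 (hKU n)]
        exact hJ.setLIntegral_inv_ofReal_add_le hU hμU hH0 hH (hK n) (hKU n) (by positivity)

end IsWeightedEnergyBound

end WeightedEnergy

section OptimalProfile

lemma integrable_rpow_of_le_one {α : Type*} [MeasurableSpace α] {μ : Measure α} [IsFiniteMeasure μ]
    {f : α → ℝ} (hf : Integrable f μ) (hf0 : 0 ≤ f) {δ : ℝ} (hδ0 : 0 ≤ δ) (hδ1 : δ ≤ 1) :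
    Integrable (fun x => f x ^ δ) μ := by
  refine ((integrable_const 1).add hf).mono' (hf.aemeasurable.pow_const δ).aestronglyMeasurable
    (.of_forall fun x => ?_)
  rw [Real.norm_of_nonneg (Real.rpow_nonneg (hf0 x) δ)]
  have hx : 0 ≤ f x := hf0 x
  rcases le_total (f x) 1 with h | h
  · exact (Real.rpow_le_one hx h hδ0).trans (le_add_of_nonneg_right hx)
  · exact (Real.rpow_le_self_of_one_le h hδ1).trans (le_add_of_nonneg_left zero_le_one)

variable {G : Type*} [NormedAddCommGroup G] [NormedSpace ℝ G] [FiniteDimensional ℝ G]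
  [MeasurableSpace G] [BorelSpace G] {μ : Measure G} [μ.IsAddHaarMeasure] {U : Set G} {H : G → ℝ}
  {J : ℝ}

namespace IsWeightedEnergyBound

lemma ofReal_mul_measure_rpow_le (hJ : IsWeightedEnergyBound μ U H J) (hJ0 : 0 < J) (hU : IsOpen U)
    (hμU : μ U ≠ ⊤) (hH0 : 0 ≤ H) (hH : IntegrableOn H U μ) {δ : ℝ} (hδ : 0 < δ) :
    ENNReal.ofReal J * μ U ^ (1 + 1 / δ) ≤
      (∫⁻ x in U, ENNReal.ofReal (H x) ^ δ ∂μ) ^ (1 / δ) := by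
  have h_meas : AEMeasurable (fun x => ENNReal.ofReal (H x)) (μ.restrict U) :=
    hH.aemeasurable.ennreal_ofReal
  have h_inv_le := hJ.setLIntegral_inv_ofReal_le hU hμU hH0 hH
  have h_ofReal_ne_zero : ENNReal.ofReal J ≠ 0 := (ENNReal.ofReal_pos.2 hJ0).ne'
  have h_ne_zero : ∀ᵐ x ∂μ.restrict U, ENNReal.ofReal (H x) ≠ 0 := by
    filter_upwards [ae_lt_top' h_meas.inv (ne_top_of_le_ne_top (by simpa using hJ0) h_inv_le)]
      with x hx using by simpa using hx
  have h_holder := measure_univ_rpow_le_lintegral_rpow_mul_lintegral_inv h_meas h_ne_zero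
    (.of_forall fun _ => ENNReal.ofReal_ne_top) hδ
  rw [Measure.restrict_apply_univ] at h_holder
  rw [mul_comm, ← ENNReal.le_div_iff_mul_le (.inl h_ofReal_ne_zero) (.inl ENNReal.ofReal_ne_top),
    div_eq_mul_inv]
  exact h_holder.trans (mul_le_mul_right h_inv_le _)

theorem le_rpow_mul_setIntegral_rpow (hJ : IsWeightedEnergyBound μ U H J) (hU : IsOpen U)
    (hU_nonempty : U.Nonempty) (hμU : μ U ≠ ⊤) (hH0 : 0 ≤ H) (hH : IntegrableOn H U μ) {δ : ℝ}
    (hδ0 : 0 < δ) (hδ1 : δ ≤ 1) :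
    J ≤ μ.real U ^ (-(1 + 1 / δ)) * (∫ x in U, H x ^ δ ∂μ) ^ (1 / δ) := by
  have h_pow_nonneg (x : G) : 0 ≤ H x ^ δ := Real.rpow_nonneg (hH0 x) δ
  have h_integral_nonneg : 0 ≤ ∫ x in U, H x ^ δ ∂μ := integral_nonneg h_pow_nonneg
  rcases le_or_gt J 0 with hJ0 | hJ0
  · exact hJ0.trans (by positivity)
  have h_real_pos : 0 < μ.real U := ENNReal.toReal_pos (hU.measure_pos μ hU_nonempty).ne' hμU
  have : IsFiniteMeasure (μ.restrict U) := isFiniteMeasure_restrict.2 hμU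
  have h_lintegral : ∫⁻ x in U, ENNReal.ofReal (H x) ^ δ ∂μ =
      ENNReal.ofReal (∫ x in U, H x ^ δ ∂μ) := by
    rw [ofReal_integral_eq_lintegral_ofReal (integrable_rpow_of_le_one hH hH0 hδ0.le hδ1)
      (.of_forall h_pow_nonneg)]
    simp only [ENNReal.ofReal_rpow_of_nonneg (hH0 _) hδ0.le]
  have h_le := hJ.ofReal_mul_measure_rpow_le hJ0 hU hμU hH0 hH hδ0
  rw [h_lintegral, ← ofReal_measureReal hμU, ENNReal.ofReal_rpow_of_nonneg (by positivity)
    (by positivity), ENNReal.ofReal_rpow_of_nonneg h_integral_nonneg (by positivity),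
    ← ENNReal.ofReal_mul hJ0.le, ENNReal.ofReal_le_ofReal_iff (by positivity)] at h_le
  rwa [Real.rpow_neg h_real_pos.le, mul_comm, ← div_eq_mul_inv, le_div_iff₀ (by positivity)]

end IsWeightedEnergyBound

end OptimalProfile

theorem optimized_cutoff_general {E : Type*} [NormedAddCommGroup E] [InnerProductSpace ℝ E]
    [FiniteDimensional ℝ E] [Nontrivial E] [MeasurableSpace E] [BorelSpace E] {ρ σ : ℝ}
    (hρ : 0 < ρ) (hρσ : ρ < σ) {v : E → ℝ} (hv : IntegrableOn v (ball 0 σ)) {δ : ℝ} (hδ0 : 0 < δ)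
    (hδ1 : δ ≤ 1) :
    minCutoffEnergy v ρ σ ≤ (σ - ρ) ^ (-(1 + 1 / δ)) *
      (∫ r in Set.Ioc ρ σ,
        (∫ x in sphere (0 : E) r, |v x| ∂μH[(Module.finrank ℝ E : ℝ) - 1]) ^ δ) ^ (1 / δ) := by
  have h_bound : IsWeightedEnergyBound volume (Set.Ioo ρ σ)
      (fun r => ∫ x in sphere (0 : E) r, |v x| ∂μH[(Module.finrank ℝ E : ℝ) - 1])
      (minCutoffEnergy v ρ σ) := fun φ hφ => by
    rw [setIntegral_eq_integral_of_forall_compl_eq_zero fun _ => hφ.eq_zero_of_notMem]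
    exact hφ.minCutoffEnergy_mul_sq_le hρ hv
  have h_le := h_bound.le_rpow_mul_setIntegral_rpow isOpen_Ioo (Set.nonempty_Ioo.2 hρσ)
    measure_Ioo_lt_top.ne (fun _ => integral_nonneg fun _ => abs_nonneg _)
    (integrableOn_setIntegral_sphere_abs hρ.le hv) hδ0 hδ1
  rwa [Real.volume_real_Ioo_of_le hρσ.le, ← integral_Ioc_eq_integral_Ioo] at h_le

/-- Optimized-cutoff lemma: the infimum of `∫ |v||∇η|²` over cutoffs `η` equal to 1 on `B_ρ`
and supported in `B_σ` is bounded by a weighted 1D quantity of the spherical integrals of `|v|`. -/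
theorem optimized_cutoff (n : ℕ) (hn : 2 ≤ n) (ρ σ : ℝ) (hρ : 0 < ρ) (hρσ : ρ < σ)
    (v : EuclideanSpace ℝ (Fin n) → ℝ)
    (hv : IntegrableOn v (ball (0 : EuclideanSpace ℝ (Fin n)) σ))
    (δ : ℝ) (hδ0 : 0 < δ) (hδ1 : δ ≤ 1) :
    sInf {J : ℝ | ∃ η : EuclideanSpace ℝ (Fin n) → ℝ, ContDiff ℝ 1 η ∧
        HasCompactSupport η ∧ tsupport η ⊆ ball (0 : EuclideanSpace ℝ (Fin n)) σ ∧
        (∀ x, 0 ≤ η x) ∧ (∀ x ∈ ball (0 : EuclideanSpace ℝ (Fin n)) ρ, η x = 1) ∧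
        J = ∫ x in ball (0 : EuclideanSpace ℝ (Fin n)) σ, |v x| * ‖fderiv ℝ η x‖ ^ 2} ≤
      (σ - ρ) ^ (-(1 + 1/δ)) *
        (∫ r in Set.Ioc ρ σ,
          (∫ x in sphere (0 : EuclideanSpace ℝ (Fin n)) r, |v x| ∂μH[(n:ℝ) - 1]) ^ δ) ^ (1/δ) := by
  have : Nontrivial (EuclideanSpace ℝ (Fin n)) := Module.nontrivial_of_finrank_pos (R := ℝ) (by
    rw [finrank_euclideanSpace_fin]; omega)
  simpa only [minCutoffEnergy, finrank_euclideanSpace_fin] using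
    optimized_cutoff_general hρ hρσ hv hδ0 hδ1
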